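/- Let n ≥ 1 be an integer and let R = ℤ[1/n] be the localization of ℤ away from n. The ring homomorphism R[X]/(X^n − 1) → ∏_{k ∣ n} R[X]/(Φ_k), induced by the quotient maps R[X] → R[X]/(Φ_k) for the positive divisors k of n, is an isomorphism of rings. -/

import Mathlib

open Polynomial

/-!
When `n` is invertible, `X ^ n - 1` is separable, because its derivative `n X ^ (n - 1)` is a unit
modulo it. Polynomials whose product divides a separable one are coprime, so the `Φ_k` with `k ∣ n`
generate pairwise comaximal ideals of `R[X]`, and the Chinese remainder theorem applies to
`X ^ n - 1 = ∏ Φ_k`.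
-/

section ChineseRemainder

variable {A ι : Type*} [CommRing A] [Fintype ι] {f : ι → A} {a : A}

/-- The Chinese remainder isomorphism for an element `a` factored as a product of pairwise coprime
elements `f i`. The factorization is a hypothesis, so that `a` may be written in any form. -/
noncomputable def quotientSpanEquivPiOfProdEq (hf : Pairwise fun i j => IsCoprime (f i) (f j))
    (ha : ∏ i, f i = a) : (A ⧸ Ideal.span {a}) ≃+* ∀ i, A ⧸ Ideal.span {f i} :=
  have span_eq_iInf : Ideal.span {a} = ⨅ i, Ideal.span {f i} := by
    rw [Ideal.iInf_span_singleton hf, ha]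
  (Ideal.quotEquivOfEq span_eq_iInf).trans <| Ideal.quotientInfRingEquivPiQuotient _
    fun _ _ hij => (Ideal.isCoprime_span_singleton_iff _ _).2 (hf hij)

theorem quotientSpanEquivPiOfProdEq_mk (hf : Pairwise fun i j => IsCoprime (f i) (f j))
    (ha : ∏ i, f i = a) (x : A) :
    quotientSpanEquivPiOfProdEq hf ha (Ideal.Quotient.mk _ x) = fun _ => Ideal.Quotient.mk _ x :=
  rfl

end ChineseRemainder

section Cyclotomic

variable {R : Type*} [CommRing R]

theorem pairwise_isCoprime_of_separable_prod {ι : Type*} [Fintype ι] {f : ι → R[X]}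
    (hf : (∏ i, f i).Separable) : Pairwise fun i j => IsCoprime (f i) (f j) := by
  classical
  intro i j hij
  have mul_dvd_prod : f i * f j ∣ ∏ k, f k := by
    rw [← Finset.prod_pair hij]
    exact Finset.prod_dvd_prod_of_subset _ _ f (Finset.subset_univ _)
  exact (hf.of_dvd mul_dvd_prod).isCoprime

theorem separable_X_pow_sub_one_of_isUnit {n : ℕ} (hn : IsUnit (n : R)) :
    (X ^ n - 1 : R[X]).Separable := by
  simpa using separable_X_pow_sub_C_unit 1 hn

theorem prod_cyclotomic_coe_divisors {n : ℕ} (hn : 0 < n) :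
    ∏ k : n.divisors, cyclotomic (k : ℕ) R = X ^ n - 1 := by
  rw [Finset.prod_coe_sort n.divisors fun k => cyclotomic k R,
    prod_cyclotomic_eq_X_pow_sub_one hn]

theorem pairwise_isCoprime_cyclotomic_divisors {n : ℕ} (hn : 0 < n) (hu : IsUnit (n : R)) :
    Pairwise fun i j : n.divisors => IsCoprime (cyclotomic (i : ℕ) R) (cyclotomic (j : ℕ) R) := by
  apply pairwise_isCoprime_of_separable_prod
  rw [prod_cyclotomic_coe_divisors hn]
  exact separable_X_pow_sub_one_of_isUnit hu

theorem stmt_7_general {n : ℕ} (hn : 0 < n) (hu : IsUnit (n : R)) :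
    ∃ e : (R[X] ⧸ Ideal.span {(X ^ n - 1 : R[X])}) ≃+*
          (∀ k : n.divisors, R[X] ⧸ Ideal.span {cyclotomic (k : ℕ) R}),
      ∀ p : R[X], e (Ideal.Quotient.mk _ p) = fun _ => Ideal.Quotient.mk _ p :=
  ⟨quotientSpanEquivPiOfProdEq (pairwise_isCoprime_cyclotomic_divisors hn hu)
    (prod_cyclotomic_coe_divisors hn), quotientSpanEquivPiOfProdEq_mk _ _⟩

end Cyclotomic

/-- Let `R = ℤ[1/n]` be the localization of `ℤ` away from `n` (i.e. any commutative ring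
satisfying `IsLocalization.Away (n : ℤ) R`).  The ring homomorphism
`R[X]/(X^n − 1) → ∏_{k ∣ n} R[X]/(Φ_k)` induced by the quotient maps
`R[X] → R[X]/(Φ_k)` for the positive divisors `k` of `n` is an isomorphism of rings. -/
theorem stmt_7 (n : ℕ) (hn : 1 ≤ n) (R : Type) [CommRing R] [Algebra ℤ R]
    [IsLocalization.Away (n : ℤ) R] :
    ∃ e : (Polynomial R ⧸ Ideal.span ({X ^ n - 1} : Set (Polynomial R))) ≃+*
          (∀ k : n.divisors,
            Polynomial R ⧸ Ideal.span ({cyclotomic (k : ℕ) R} : Set (Polynomial R))),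
      ∀ p : Polynomial R,
        e (Ideal.Quotient.mk _ p) = fun k => Ideal.Quotient.mk _ p := by
  have isUnit_n : IsUnit (n : R) := by
    simpa using IsLocalization.Away.algebraMap_isUnit (S := R) (n : ℤ)
  exact stmt_7_general hn isUnit_n
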